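/- Let S = F[x_0,…,x_n] be a polynomial ring over a field F with maximal homogeneous ideal m = (x_0,…,x_n), and let I ⊆ S be generated by a regular sequence f_0,…,f_n of forms of degree d. Then for every t ≥ 1, the largest degree s with (S/I^t)_s ≠ 0 is exactly td + n(d−1) − 1; that is, m^{td+n(d−1)} ⊆ I^t but m^{td+n(d−1)−1} ⊄ I^t. -/

import Mathlib

open MvPolynomial

/-!
A product of `t` generators is either `f_n ^ t` or involves one of `f_0, …, f_{n-1}`, so `I ^ t` is
contained in `Q = (f_0, …, f_{n-1}, f_n ^ t)`, whose generators again form a regular sequence. The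
Hilbert series of a complete intersection of forms of degrees `d_i`, as many as there are variables,
is the monic polynomial `∏ (1 + X + ⋯ + X ^ (d_i - 1))` of degree `∑ (d_i - 1)`. For `S/Q` that
degree is `n(d - 1) + td - 1`, which shows `m ^ (td + n(d - 1) - 1) ⊄ I ^ t`.

For `t = 1` the same series gives `m ^ (d + n(d - 1)) ⊆ I`. Writing a form of degree `k + d` in `I`
as a combination of the `f_i` with coefficients that are forms of degree `k` shows
`m ^ (k + d) ⊆ m ^ k * I`, and induction on `t` yields the upper bound.
-/

open RingTheory.Sequence Module

section RangeSpan

variable {R : Type*} [CommSemiring R] {r : ℕ}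

lemma ofList_ofFn (f : Fin r → R) : Ideal.ofList (List.ofFn f) = Ideal.span (Set.range f) := by
  simp only [Ideal.ofList, List.mem_ofFn]
  rfl

lemma span_range_eq_init_sup_last (f : Fin (r + 1) → R) :
    Ideal.span (Set.range f) =
      Ideal.span (Set.range (Fin.init f)) ⊔ Ideal.span {f (Fin.last r)} := by
  conv_lhs => rw [← Fin.snoc_init_self f, Fin.range_snoc, Ideal.span_insert, sup_comm]

lemma sup_pow_le_sup_pow (J K : Ideal R) (t : ℕ) : (J ⊔ K) ^ t ≤ J ⊔ K ^ t := by
  induction t with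
  | zero => simp
  | succ t ih =>
    calc (J ⊔ K) ^ (t + 1) ≤ (J ⊔ K ^ t) * (J ⊔ K) := by rw [pow_succ]; gcongr
      _ ≤ J ⊔ K ^ (t + 1) := by
        rw [Ideal.sup_mul, Ideal.mul_sup (K ^ t), pow_succ]
        exact sup_le (Ideal.mul_le_left.trans le_sup_left)
          (sup_le_sup_right Ideal.mul_le_right _)

lemma span_range_pow_le_snoc_pow (f : Fin (r + 1) → R) (t : ℕ) :
    Ideal.span (Set.range f) ^ t ≤
      Ideal.span (Set.range (Fin.snoc (Fin.init f) (f (Fin.last r) ^ t) : Fin (r + 1) → R)) := by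
  rw [span_range_eq_init_sup_last f, span_range_eq_init_sup_last (Fin.snoc _ _), Fin.init_snoc,
    Fin.snoc_last, ← Ideal.span_singleton_pow]
  exact sup_pow_le_sup_pow _ _ t

end RangeSpan

section RegularSequence

variable {R : Type*} [CommRing R] {r : ℕ}

lemma isWeaklyRegular_ofFn_succ_iff (f : Fin (r + 1) → R) :
    IsWeaklyRegular R (List.ofFn f) ↔ IsWeaklyRegular R (List.ofFn (Fin.init f)) ∧
      IsSMulRegular (R ⧸ Ideal.span (Set.range (Fin.init f))) (f (Fin.last r)) := by
  have h : Ideal.ofList (List.ofFn (Fin.init f)) • (⊤ : Submodule R R) =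
      Ideal.span (Set.range (Fin.init f)) := by
    rw [ofList_ofFn, smul_eq_mul, Ideal.mul_top]
  rw [← (Submodule.quotEquivOfEq _ _ h).isSMulRegular_congr, ← isWeaklyRegular_singleton_iff,
    ← isWeaklyRegular_append_iff, List.ofFn_succ', List.concat_eq_append]
  rfl

lemma isWeaklyRegular_ofFn_snoc_pow {f : Fin (r + 1) → R} (hf : IsWeaklyRegular R (List.ofFn f))
    (t : ℕ) : IsWeaklyRegular R (List.ofFn (Fin.snoc (Fin.init f) (f (Fin.last r) ^ t) :
      Fin (r + 1) → R)) := by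
  obtain ⟨hinit, hlast⟩ := (isWeaklyRegular_ofFn_succ_iff f).1 hf
  rw [isWeaklyRegular_ofFn_succ_iff, Fin.init_snoc, Fin.snoc_last]
  exact ⟨hinit, hlast.pow t⟩

end RegularSequence

section HilbertSeries

variable {F A : Type*} [Field F] [CommRing A] [Algebra F A] (𝒜 : ℕ → Submodule F A)

/-- The degree `k` piece `(A/J)_k` of the quotient of `A = ⨁ 𝒜 k` by a homogeneous ideal `J`,
encoded as the quotient of `𝒜 k` by `J ∩ 𝒜 k`. -/
abbrev QuotientPiece (J : Ideal A) (k : ℕ) : Type _ :=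
  𝒜 k ⧸ (J.restrictScalars F).submoduleOf (𝒜 k)

/-- The Hilbert series `∑ dim (A/J)_k X ^ k`, with integer coefficients so that one can subtract.
It is meaningful when all `𝒜 k` are finite-dimensional, since `finrank` is `0` otherwise. -/
noncomputable def hilbertSeries (J : Ideal A) : PowerSeries ℤ :=
  PowerSeries.mk fun k ↦ (finrank F (QuotientPiece 𝒜 J k) : ℤ)

variable {𝒜} {J : Ideal A} {f : A} {d k : ℕ}

lemma quotientPiece_mk_eq_zero_iff {a : 𝒜 k} :
    (Submodule.Quotient.mk a : QuotientPiece 𝒜 J k) = 0 ↔ (a : A) ∈ J :=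
  Submodule.Quotient.mk_eq_zero _

lemma coeff_hilbertSeries_eq_zero_iff [∀ k, FiniteDimensional F (𝒜 k)] :
    PowerSeries.coeff k (hilbertSeries 𝒜 J) = 0 ↔ ∀ a ∈ 𝒜 k, a ∈ J := by
  rw [hilbertSeries, PowerSeries.coeff_mk, Nat.cast_eq_zero, finrank_zero_iff,
    Submodule.Quotient.subsingleton_iff, Submodule.submoduleOf_eq_top]
  rfl

variable [GradedAlgebra 𝒜]

lemma mem_of_mem_sup_span_singleton (hJ : J.IsHomogeneous 𝒜) (hf : f ∈ 𝒜 d) (hk : k < d) {a : A}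
    (ha : a ∈ 𝒜 k) (haJ : a ∈ J ⊔ Ideal.span {f}) : a ∈ J := by
  obtain ⟨b, c, hc, rfl⟩ := Ideal.mem_span_singleton_sup.1 (sup_comm J _ ▸ haJ)
  rw [← DirectSum.decompose_of_mem_same 𝒜 ha, DirectSum.decompose_add, DirectSum.add_apply,
    Submodule.coe_add, DirectSum.coe_decompose_mul_of_right_mem_of_not_le 𝒜 hf hk.not_ge, zero_add]
  exact hJ k hc

lemma exists_sub_mul_mem_of_mem_sup_span_singleton (hJ : J.IsHomogeneous 𝒜) (hf : f ∈ 𝒜 d) {a : A}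
    (ha : a ∈ 𝒜 (k + d)) (haJ : a ∈ J ⊔ Ideal.span {f}) : ∃ b ∈ 𝒜 k, a - b * f ∈ J := by
  obtain ⟨b, c, hc, rfl⟩ := Ideal.mem_span_singleton_sup.1 (sup_comm J _ ▸ haJ)
  refine ⟨DirectSum.decompose 𝒜 b k, SetLike.coe_mem _, ?_⟩
  nth_rw 1 [← DirectSum.decompose_of_mem_same 𝒜 ha]
  rw [DirectSum.decompose_add, DirectSum.add_apply, Submodule.coe_add,
    DirectSum.coe_decompose_mul_add_of_right_mem 𝒜 hf, add_sub_cancel_left]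
  exact hJ _ hc

lemma finrank_quotientPiece_sup_of_lt (hJ : J.IsHomogeneous 𝒜) (hf : f ∈ 𝒜 d) (hk : k < d) :
    finrank F (QuotientPiece 𝒜 (J ⊔ Ideal.span {f}) k) = finrank F (QuotientPiece 𝒜 J k) := by
  have h : ((J ⊔ Ideal.span {f}).restrictScalars F).submoduleOf (𝒜 k) =
      (J.restrictScalars F).submoduleOf (𝒜 k) := by
    ext a
    exact ⟨mem_of_mem_sup_span_singleton hJ hf hk a.2, fun ha ↦ Ideal.mem_sup_left ha⟩
  exact (Submodule.quotEquivOfEq _ _ h).finrank_eq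

-- The count is read off the exact sequence `0 → (A/J)_k → (A/J)_{k+d} → (A/(J + f))_{k+d} → 0`.
lemma finrank_quotientPiece_sup_add [FiniteDimensional F (𝒜 (k + d))]
    (hJ : J.IsHomogeneous 𝒜) (hf : f ∈ 𝒜 d) (hreg : IsSMulRegular (A ⧸ J) f) :
    finrank F (QuotientPiece 𝒜 (J ⊔ Ideal.span {f}) (k + d)) + finrank F (QuotientPiece 𝒜 J k) =
      finrank F (QuotientPiece 𝒜 J (k + d)) := by
  let mulByF : QuotientPiece 𝒜 J k →ₗ[F] QuotientPiece 𝒜 J (k + d) :=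
    Submodule.mapQ _ _
      ((LinearMap.mulRight F f).restrict fun _ ha ↦ SetLike.mul_mem_graded ha hf)
      fun _ ha ↦ J.mul_mem_right f ha
  have hle : J.restrictScalars F ≤ (J ⊔ Ideal.span {f}).restrictScalars F :=
    fun _ ↦ Ideal.mem_sup_left
  let proj : QuotientPiece 𝒜 J (k + d) →ₗ[F] QuotientPiece 𝒜 (J ⊔ Ideal.span {f}) (k + d) :=
    Submodule.factor (Submodule.comap_mono hle)
  have hinj : LinearMap.ker mulByF = ⊥ := by
    refine LinearMap.ker_eq_bot'.2 ((Submodule.Quotient.forall _).2 fun a ha ↦ ?_)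
    have haf : f * (a : A) ∈ J := mul_comm f (a : A) ▸ quotientPiece_mk_eq_zero_iff.1 ha
    exact quotientPiece_mk_eq_zero_iff.2 (mem_of_isSMulRegular_quotient_of_smul_mem hreg haf)
  have hexact : LinearMap.ker proj = LinearMap.range mulByF := by
    refine le_antisymm ((Submodule.Quotient.forall _).2 fun a ha ↦ ?_) ?_
    · obtain ⟨b, hb, hab⟩ := exists_sub_mul_mem_of_mem_sup_span_singleton hJ hf a.2
        (quotientPiece_mk_eq_zero_iff.1 ha)
      refine ⟨Submodule.Quotient.mk ⟨b, hb⟩, Eq.symm ?_⟩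
      exact (Submodule.Quotient.eq ((J.restrictScalars F).submoduleOf (𝒜 (k + d)))).2 hab
    · refine LinearMap.range_le_iff_comap.2 (eq_top_iff.2 ((Submodule.Quotient.forall _).2 ?_))
      exact fun b _ ↦ quotientPiece_mk_eq_zero_iff.2
        (Ideal.mem_sup_right (Ideal.mem_span_singleton'.2 ⟨b, rfl⟩))
  have hsurj : LinearMap.range proj = ⊤ :=
    LinearMap.range_eq_top.2 (Submodule.factor_surjective _)
  rw [← LinearMap.finrank_range_add_finrank_ker proj, hexact, hsurj, finrank_top,
    LinearMap.finrank_range_of_inj (LinearMap.ker_eq_bot.1 hinj)]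

lemma hilbertSeries_sup_span_singleton [∀ k, FiniteDimensional F (𝒜 k)]
    (hJ : J.IsHomogeneous 𝒜) (hf : f ∈ 𝒜 d) (hreg : IsSMulRegular (A ⧸ J) f) :
    hilbertSeries 𝒜 (J ⊔ Ideal.span {f}) = hilbertSeries 𝒜 J * (1 - PowerSeries.X ^ d) := by
  ext k
  simp only [hilbertSeries, mul_sub, mul_one, map_sub, PowerSeries.coeff_mk,
    PowerSeries.coeff_mul_X_pow']
  split_ifs with hk
  · obtain ⟨j, rfl⟩ := Nat.exists_eq_add_of_le' hk
    rw [Nat.add_sub_cancel, ← finrank_quotientPiece_sup_add hJ hf hreg]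
    simp
  · rw [finrank_quotientPiece_sup_of_lt hJ hf (not_le.1 hk), sub_zero]

lemma hilbertSeries_span_range [∀ k, FiniteDimensional F (𝒜 k)] {r : ℕ} {f : Fin r → A}
    {d : Fin r → ℕ} (hf : ∀ i, f i ∈ 𝒜 (d i)) (hreg : IsWeaklyRegular A (List.ofFn f)) :
    hilbertSeries 𝒜 (Ideal.span (Set.range f)) =
      hilbertSeries 𝒜 ⊥ * ∏ i, (1 - PowerSeries.X ^ d i) := by
  induction r with
  | zero => simp
  | succ r ih =>
    obtain ⟨hinit, hlast⟩ := (isWeaklyRegular_ofFn_succ_iff f).1 hreg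
    have hhom : (Ideal.span (Set.range (Fin.init f))).IsHomogeneous 𝒜 :=
      Ideal.homogeneous_span 𝒜 _ (Set.forall_mem_range.2 fun i ↦ ⟨_, hf i.castSucc⟩)
    rw [span_range_eq_init_sup_last, hilbertSeries_sup_span_singleton hhom (hf _) hlast,
      ih (f := Fin.init f) (fun i ↦ hf i.castSucc) hinit, mul_assoc, Fin.prod_univ_castSucc]

lemma degree_ne_zero_of_isRegular [∀ k, FiniteDimensional F (𝒜 k)] {r : ℕ} {f : Fin r → A}
    {d : Fin r → ℕ} (hf : ∀ i, f i ∈ 𝒜 (d i)) (hreg : IsRegular A (List.ofFn f)) (i : Fin r) :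
    d i ≠ 0 := by
  intro hi
  have hzero : hilbertSeries 𝒜 (Ideal.span (Set.range f)) = 0 := by
    rw [hilbertSeries_span_range hf hreg.toIsWeaklyRegular,
      Finset.prod_eq_zero (Finset.mem_univ i) (by rw [hi, pow_zero, sub_self]), mul_zero]
  have hone : (1 : A) ∈ Ideal.span (Set.range f) :=
    coeff_hilbertSeries_eq_zero_iff.1 (by rw [hzero, map_zero]) 1 SetLike.GradedOne.one_mem
  apply hreg.top_ne_smul
  rw [ofList_ofFn, smul_eq_mul, Ideal.mul_top, (Ideal.eq_top_iff_one _).2 hone]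

end HilbertSeries

section MvPolynomial

attribute [local instance] MvPolynomial.gradedAlgebra

section PowersOfVars

variable {σ R ι : Type*} [CommSemiring R] {d e k : ℕ}

lemma finrank_homogeneousSubmodule [Fintype σ] [Nontrivial R] (k : ℕ) :
    finrank R (homogeneousSubmodule σ R k) = (Fintype.card σ + k - 1).choose k := by
  classical
  have hs : {m : σ →₀ ℕ | m.degree = k} =
      ((Finset.univ : Finset σ).finsuppAntidiag k : Set (σ →₀ ℕ)) := by
    ext m
    simp [Finsupp.degree_eq_sum]
  rw [homogeneousSubmodule_eq_finsupp_supported, hs,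
    (AddMonoidAlgebra.supportedEquivFinsupp (R := R) (S := R) _).finrank_eq,
    finrank_finsupp_self]
  simp only [Finset.coe_sort_coe, Fintype.card_coe, Finset.card_finsuppAntidiag_nat_eq_choose,
    Finset.card_univ]

lemma isHomogeneous_mem_pow_idealOfVars {g : MvPolynomial σ R} (hg : g.IsHomogeneous k) :
    g ∈ idealOfVars σ R ^ k :=
  (mem_pow_idealOfVars_iff k g).2 fun x hx ↦
    (hg.degree_eq_sum_deg_support hx).trans_le (Finsupp.degree_apply x).ge

lemma pow_idealOfVars_le_iff {J : Ideal (MvPolynomial σ R)} :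
    idealOfVars σ R ^ k ≤ J ↔ ∀ g ∈ homogeneousSubmodule σ R k, g ∈ J := by
  refine ⟨fun h g hg ↦ h (isHomogeneous_mem_pow_idealOfVars hg), fun h ↦ ?_⟩
  rw [pow_idealOfVars_eq_span, Ideal.span_le]
  rintro _ ⟨x, hx, rfl⟩
  exact h _ (isHomogeneous_monomial 1 hx)

lemma homogeneousComponent_mul_of_isHomogeneous (c : MvPolynomial σ R) {f : MvPolynomial σ R}
    (hf : f.IsHomogeneous d) :
    homogeneousComponent (k + d) (c * f) = homogeneousComponent k c * f := by
  rw [← decomposition.decompose'_apply, ← decomposition.decompose'_apply]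
  exact DirectSum.coe_decompose_mul_add_of_right_mem (homogeneousSubmodule σ R) hf

lemma pow_idealOfVars_add_le_mul_span_range {f : ι → MvPolynomial σ R}
    (hf : ∀ i, (f i).IsHomogeneous d) (hk : idealOfVars σ R ^ (k + d) ≤ Ideal.span (Set.range f)) :
    idealOfVars σ R ^ (k + d) ≤ idealOfVars σ R ^ k * Ideal.span (Set.range f) := by
  rw [pow_idealOfVars_le_iff] at hk ⊢
  intro g hg
  obtain ⟨c, hc⟩ := Finsupp.mem_ideal_span_range_iff_exists_finsupp.1 (hk g hg)
  have hg_self : homogeneousComponent (k + d) g = g := by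
    rw [homogeneousComponent_of_mem hg, if_pos rfl]
  rw [← hg_self, ← hc, Finsupp.sum, map_sum]
  refine Ideal.sum_mem _ fun i _ ↦ ?_
  rw [homogeneousComponent_mul_of_isHomogeneous _ (hf i)]
  exact Ideal.mul_mem_mul
    (isHomogeneous_mem_pow_idealOfVars (homogeneousComponent_isHomogeneous k _))
    (Ideal.subset_span ⟨i, rfl⟩)

lemma pow_idealOfVars_mul_add_le_span_range_pow {f : ι → MvPolynomial σ R}
    (hf : ∀ i, (f i).IsHomogeneous d) (he : idealOfVars σ R ^ e ≤ Ideal.span (Set.range f))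
    (s : ℕ) : idealOfVars σ R ^ (s * d + e) ≤ Ideal.span (Set.range f) ^ (s + 1) := by
  induction s with
  | zero => simpa using he
  | succ s ih =>
    have hk : idealOfVars σ R ^ (s * d + e + d) ≤ Ideal.span (Set.range f) :=
      (Ideal.pow_le_pow_right (by lia)).trans he
    calc idealOfVars σ R ^ ((s + 1) * d + e)
        = idealOfVars σ R ^ (s * d + e + d) := by ring_nf
      _ ≤ idealOfVars σ R ^ (s * d + e) * Ideal.span (Set.range f) :=
        pow_idealOfVars_add_le_mul_span_range hf hk
      _ ≤ Ideal.span (Set.range f) ^ (s + 1 + 1) := by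
        rw [pow_succ _ (s + 1)]
        gcongr

end PowersOfVars

section CompleteIntersection

variable {σ F : Type*} [Field F] {r k : ℕ}

instance [Finite σ] (k : ℕ) : FiniteDimensional F (homogeneousSubmodule σ F k) :=
  Module.Finite.iff_fg.2 (homogeneousSubmodule_fg _ _ k)

variable [Fintype σ]

lemma hilbertSeries_homogeneousSubmodule_bot_mul :
    hilbertSeries (homogeneousSubmodule σ F) ⊥ * (1 - PowerSeries.X) ^ Fintype.card σ = 1 := by
  have hcoeff (k : ℕ) : finrank F (QuotientPiece (homogeneousSubmodule σ F) ⊥ k) =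
      (Fintype.card σ + k - 1).choose k := by
    have hbot : ((⊥ : Ideal (MvPolynomial σ F)).restrictScalars F).submoduleOf
        (homogeneousSubmodule σ F k) = ⊥ := by
      simp [Submodule.submoduleOf]
    rw [(Submodule.quotEquivOfEqBot _ hbot).finrank_eq, finrank_homogeneousSubmodule]
  by_cases hσ : Fintype.card σ = 0
  · ext k
    cases k <;> simp [hilbertSeries, hcoeff, hσ]
  · obtain ⟨n, hn⟩ := Nat.exists_eq_succ_of_ne_zero hσ
    have hseries : hilbertSeries (homogeneousSubmodule σ F) ⊥ =
        PowerSeries.mk fun k ↦ ((n + k).choose n : ℤ) := by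
      ext k
      rw [hilbertSeries, PowerSeries.coeff_mk, PowerSeries.coeff_mk, hcoeff, hn,
        Nat.succ_add_sub_one, Nat.choose_symm_add]
    rw [hseries, hn]
    exact PowerSeries.mk_add_choose_mul_one_sub_pow_eq_one ℤ n

lemma natDegree_geom_sum_X (R : Type*) [CommRing R] [Nontrivial R] (n : ℕ) :
    (∑ j ∈ Finset.range n, (Polynomial.X : Polynomial R) ^ j).natDegree = n - 1 := by
  obtain _ | n := n
  · simp
  have hmul := congrArg Polynomial.natDegree (geom_sum_mul (Polynomial.X : Polynomial R) (n + 1))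
  rw [← Polynomial.C_1, Polynomial.natDegree_X_pow_sub_C,
    (Polynomial.monic_geom_sum_X n.succ_ne_zero).natDegree_mul (Polynomial.monic_X_sub_C 1),
    Polynomial.natDegree_X_sub_C] at hmul
  lia

lemma hilbertSeries_span_range_eq_prod_geom_sum {f : Fin r → MvPolynomial σ F} {d : Fin r → ℕ}
    (hf : ∀ i, (f i).IsHomogeneous (d i))
    (hreg : IsWeaklyRegular (MvPolynomial σ F) (List.ofFn f)) (hr : Fintype.card σ = r) :
    hilbertSeries (homogeneousSubmodule σ F) (Ideal.span (Set.range f)) =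
      (∏ i, ∑ j ∈ Finset.range (d i), Polynomial.X ^ j : Polynomial ℤ) := by
  have hgeom (i : Fin r) : (1 - PowerSeries.X ^ d i : PowerSeries ℤ) =
      (1 - PowerSeries.X) * ((∑ j ∈ Finset.range (d i), Polynomial.X ^ j : Polynomial ℤ) :
        PowerSeries ℤ) := by
    rw [← mul_neg_geom_sum, ← Polynomial.coeToPowerSeries.ringHom_apply, map_sum]
    simp
  have hbot : hilbertSeries (homogeneousSubmodule σ F) ⊥ * (1 - PowerSeries.X) ^ r = 1 :=
    hr ▸ hilbertSeries_homogeneousSubmodule_bot_mul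
  rw [hilbertSeries_span_range hf hreg, Finset.prod_congr rfl fun i _ ↦ hgeom i,
    Finset.prod_mul_distrib, Finset.prod_const, Finset.card_univ, Fintype.card_fin,
    ← mul_assoc, hbot, one_mul]
  exact (map_prod Polynomial.coeToPowerSeries.ringHom _ _).symm

lemma pow_idealOfVars_le_span_range_iff {f : Fin r → MvPolynomial σ F} {d : Fin r → ℕ}
    (hf : ∀ i, (f i).IsHomogeneous (d i)) (hd : ∀ i, d i ≠ 0)
    (hreg : IsWeaklyRegular (MvPolynomial σ F) (List.ofFn f)) (hr : Fintype.card σ = r) :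
    idealOfVars σ F ^ k ≤ Ideal.span (Set.range f) ↔ ∑ i, (d i - 1) < k := by
  let P : Polynomial ℤ := ∏ i, ∑ j ∈ Finset.range (d i), Polynomial.X ^ j
  have hmonic : P.Monic :=
    Polynomial.monic_prod_of_monic _ _ fun i _ ↦ Polynomial.monic_geom_sum_X (hd i)
  have hdeg : P.natDegree = ∑ i, (d i - 1) := by
    rw [Polynomial.natDegree_prod_of_monic _ _ fun i _ ↦ Polynomial.monic_geom_sum_X (hd i)]
    exact Finset.sum_congr rfl fun i _ ↦ natDegree_geom_sum_X ℤ (d i)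
  have hcoeff (j : ℕ) : idealOfVars σ F ^ j ≤ Ideal.span (Set.range f) ↔ P.coeff j = 0 := by
    rw [pow_idealOfVars_le_iff, ← coeff_hilbertSeries_eq_zero_iff,
      hilbertSeries_span_range_eq_prod_geom_sum hf hreg hr, Polynomial.coeff_coe]
  rw [← hdeg]
  refine ⟨fun h ↦ ?_, fun h ↦ (hcoeff k).2 (Polynomial.coeff_eq_zero_of_natDegree_lt h)⟩
  by_contra! hk
  have htop : P.leadingCoeff = 0 := (hcoeff _).1 ((Ideal.pow_le_pow_right hk).trans h)
  exact one_ne_zero (hmonic.leadingCoeff.symm.trans htop)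

lemma sum_lt_of_pow_idealOfVars_le_span_range_pow {f : Fin (r + 1) → MvPolynomial σ F}
    {d : Fin (r + 1) → ℕ} (hf : ∀ i, (f i).IsHomogeneous (d i)) (hd : ∀ i, d i ≠ 0)
    (hreg : IsWeaklyRegular (MvPolynomial σ F) (List.ofFn f)) (hr : Fintype.card σ = r + 1)
    {t : ℕ} (ht : t ≠ 0) (hk : idealOfVars σ F ^ k ≤ Ideal.span (Set.range f) ^ t) :
    ∑ i : Fin r, (d i.castSucc - 1) + (d (Fin.last r) * t - 1) < k := by
  let g : Fin (r + 1) → MvPolynomial σ F := Fin.snoc (Fin.init f) (f (Fin.last r) ^ t)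
  let e : Fin (r + 1) → ℕ := Fin.snoc (Fin.init d) (d (Fin.last r) * t)
  have hg (i : Fin (r + 1)) : (g i).IsHomogeneous (e i) := by
    cases i using Fin.lastCases with
    | last => simpa only [g, e, Fin.snoc_last] using (hf (Fin.last r)).pow t
    | cast i => simpa only [g, e, Fin.snoc_castSucc, Fin.init] using hf i.castSucc
  have he (i : Fin (r + 1)) : e i ≠ 0 := by
    cases i using Fin.lastCases with
    | last => simpa only [e, Fin.snoc_last] using mul_ne_zero (hd (Fin.last r)) ht
    | cast i => simpa only [e, Fin.snoc_castSucc, Fin.init] using hd i.castSucc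
  have hlt := (pow_idealOfVars_le_span_range_iff hg he (isWeaklyRegular_ofFn_snoc_pow hreg t) hr).1
    (hk.trans (span_range_pow_le_snoc_pow f t))
  simpa only [e, Fin.sum_univ_castSucc, Fin.snoc_castSucc, Fin.snoc_last, Fin.init] using hlt

end CompleteIntersection

end MvPolynomial

/-!
STATEMENT 9: Let `S = F[x_0, …, x_n]` with maximal homogeneous ideal `m = (x_0, …, x_n)`,
and let `I ⊆ S` be generated by a regular sequence `f_0, …, f_n` of forms of degree `d`.
Then for every `t ≥ 1` the largest degree `s` with `(S/I^t)_s ≠ 0` is exactly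
`t*d + n*(d-1) - 1`; that is, `m^(t*d + n*(d-1)) ⊆ I^t` but `m^(t*d + n*(d-1) - 1) ⊄ I^t`.

(Saying that `m^e ⊆ I^t` is exactly saying that `(S/I^t)_s = 0` for all `s ≥ e`, since `m^e`
is the ideal of all polynomials all of whose terms have degree at least `e`.)
-/
theorem stmt_9 {F : Type*} [Field F] (n : ℕ) (d : ℕ)
    (f : Fin (n + 1) → MvPolynomial (Fin (n + 1)) F)
    (hdeg : ∀ i, f i ∈ homogeneousSubmodule (Fin (n + 1)) F d)
    (hreg : RingTheory.Sequence.IsRegular (MvPolynomial (Fin (n + 1)) F) (List.ofFn f))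
    (I : Ideal (MvPolynomial (Fin (n + 1)) F)) (hI : I = Ideal.span (Set.range f))
    (t : ℕ) (ht : 1 ≤ t) :
    Ideal.span (Set.range (X : Fin (n + 1) → MvPolynomial (Fin (n + 1)) F)) ^
        (t * d + n * (d - 1)) ≤ I ^ t ∧
      ¬ Ideal.span (Set.range (X : Fin (n + 1) → MvPolynomial (Fin (n + 1)) F)) ^
          (t * d + n * (d - 1) - 1) ≤ I ^ t := by
  let _ := gradedAlgebra (σ := Fin (n + 1)) (R := F)
  have hd : d ≠ 0 := degree_ne_zero_of_isRegular hdeg hreg 0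
  have hweak := hreg.toIsWeaklyRegular
  have hcard : Fintype.card (Fin (n + 1)) = n + 1 := Fintype.card_fin _
  subst hI
  constructor
  · have hbase : idealOfVars (Fin (n + 1)) F ^ (d + n * (d - 1)) ≤ Ideal.span (Set.range f) := by
      rw [pow_idealOfVars_le_span_range_iff hdeg (fun _ ↦ hd) hweak hcard, Fin.sum_const,
        smul_eq_mul]
      lia
    obtain ⟨s, rfl⟩ := Nat.exists_eq_add_of_le' ht
    rw [add_one_mul, add_assoc]
    exact pow_idealOfVars_mul_add_le_span_range_pow hdeg hbase s
  · intro hle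
    have hlt := sum_lt_of_pow_idealOfVars_le_span_range_pow hdeg (fun _ ↦ hd) hweak hcard
      (Nat.one_le_iff_ne_zero.1 ht) hle
    rw [Fin.sum_const, smul_eq_mul, mul_comm d t] at hlt
    have htd : 0 < t * d := by positivity
    lia
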